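/- Let d ≥ 1, t > 0, and let μ be a σ-finite Borel measure on ℝ^d with μ p_{2t} < ∞. Then sup_{h ≤ h' ≤ 2h} ∫_{ℝ^d} μ(dy) ∫_{ℝ^d} p_{h'}(z) | p_{t-h}(y - z) - p_t(y) | dz → 0 as h → 0⁺ (with 0 < h < t/2). -/

import Mathlib

open Filter MeasureTheory

/-- The standard Gaussian density `p_t(x) = (2πt)^{-d/2} exp(-|x|²/(2t))` on `ℝ^d`. -/
noncomputable def gaussDensity (d : ℕ) (t : ℝ) (x : EuclideanSpace ℝ (Fin d)) : ℝ :=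
  (2 * Real.pi * t) ^ (-(d : ℝ) / 2) * Real.exp (-‖x‖ ^ 2 / (2 * t))

/-! Scaling `z = √s • w` turns the integral against `p_s(z) dz` into one against the fixed density
`p_1(w) dw`, and the integrand `p_1(w) |p_r(y - √s • w) - p_t(y)|` tends to `0` pointwise as `r → t`
and `s → 0`. By the inequality `‖y‖² / T ≤ ‖y - z‖² / r + ‖z‖² / (T - r)`, for `T > t` it is
dominated by a constant multiple of `p_T(y) p_2(w)`, which is `μ ⊗ dw`-integrable. Dominated
convergence thus gives a joint limit in `(r, s)`, which for `r = t - h` is uniform over the window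
of `s`. -/

open scoped ENNReal Topology

lemma tendsto_biSup_zero_of_tendsto_smallSets {α β : Type*} {l : Filter α} {k : Filter β}
    {f : α → β → ℝ≥0∞} {s : α → Set β}
    (hf : Tendsto (fun q : α × β => f q.1 q.2) (l ×ˢ k) (𝓝 0)) (hs : Tendsto s l k.smallSets) :
    Tendsto (fun a => ⨆ b ∈ s a, f a b) l (𝓝 0) := by
  rw [ENNReal.tendsto_nhds_zero] at hf ⊢
  intro ε hε
  obtain ⟨p, hp, q, hq, hpq⟩ := eventually_prod_iff.1 (hf ε hε)
  filter_upwards [hp, hs.eventually hq.smallSets] with a ha hsa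
  exact iSup₂_le fun b hb => hpq ha (hsa b hb)

lemma norm_add_sq_div_add_le {E : Type*} [SeminormedAddGroup E] (x y : E) {a b : ℝ}
    (ha : 0 < a) (hb : 0 < b) : ‖x + y‖ ^ 2 / (a + b) ≤ ‖x‖ ^ 2 / a + ‖y‖ ^ 2 / b := by
  have hsquare : ‖x‖ ^ 2 / a + ‖y‖ ^ 2 / b - (‖x‖ + ‖y‖) ^ 2 / (a + b) =
      (b * ‖x‖ - a * ‖y‖) ^ 2 / (a * b * (a + b)) := by
    field_simp
    ring
  calc ‖x + y‖ ^ 2 / (a + b) ≤ (‖x‖ + ‖y‖) ^ 2 / (a + b) := by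
        gcongr
        exact norm_add_le x y
    _ ≤ ‖x‖ ^ 2 / a + ‖y‖ ^ 2 / b := sub_nonneg.1 (hsquare ▸ by positivity)

section gaussDensity

variable {d : ℕ} {r s t T : ℝ}

lemma gaussDensity_nonneg (ht : 0 ≤ t) (x : EuclideanSpace ℝ (Fin d)) :
    0 ≤ gaussDensity d t x := by
  unfold gaussDensity
  positivity

@[fun_prop]
lemma continuous_gaussDensity : Continuous (gaussDensity d t) := by
  unfold gaussDensity
  fun_prop

lemma continuousAt_gaussDensity_prod (ht : t ≠ 0) (x : EuclideanSpace ℝ (Fin d)) :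
    ContinuousAt (fun q : ℝ × EuclideanSpace ℝ (Fin d) => gaussDensity d q.1 q.2) (t, x) := by
  unfold gaussDensity
  refine .mul (.rpow_const (by fun_prop) (Or.inl ?_)) (.rexp (.div ?_ ?_ ?_))
  · simpa using ht
  · fun_prop
  · fun_prop
  · simpa using ht

lemma integrable_gaussDensity (ht : 0 < t) : Integrable (gaussDensity d t) := by
  have hexp : Integrable fun x : EuclideanSpace ℝ (Fin d) => Real.exp (-(2 * t)⁻¹ * ‖x‖ ^ 2) := by
    refine .of_integral_ne_zero ?_
    rw [GaussianFourier.integral_rexp_neg_mul_sq_norm (by positivity)]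
    positivity
  refine (hexp.const_mul ((2 * Real.pi * t) ^ (-(d : ℝ) / 2))).congr (.of_forall fun x => ?_)
  simp only [gaussDensity]
  ring_nf

lemma pow_mul_gaussDensity_sq_mul_smul {c : ℝ} (hc : 0 < c) (ht : 0 ≤ t)
    (x : EuclideanSpace ℝ (Fin d)) :
    c ^ d * gaussDensity d (c ^ 2 * t) (c • x) = gaussDensity d t x := by
  have hprefactor : c ^ d * (2 * Real.pi * (c ^ 2 * t)) ^ (-(d : ℝ) / 2) =
      (2 * Real.pi * t) ^ (-(d : ℝ) / 2) := by
    have hpow : (c ^ 2) ^ (-(d : ℝ) / 2) = (c ^ d)⁻¹ := by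
      rw [← Real.rpow_natCast c 2, ← Real.rpow_mul hc.le, ← Real.rpow_natCast c d,
        ← Real.rpow_neg hc.le]
      congr 1
      push_cast
      ring
    rw [mul_left_comm, Real.mul_rpow (by positivity) (by positivity), hpow,
      mul_inv_cancel_left₀ (by positivity)]
  have hexponent : -‖c • x‖ ^ 2 / (2 * (c ^ 2 * t)) = -‖x‖ ^ 2 / (2 * t) := by
    rw [norm_smul, mul_pow, Real.norm_eq_abs, sq_abs, mul_left_comm, ← mul_neg,
      mul_div_mul_left _ _ (by positivity)]
  rw [gaussDensity, gaussDensity, ← mul_assoc, hprefactor, hexponent]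

lemma gaussDensity_mul_exp_sq_div (hs : 0 ≤ s) (x : EuclideanSpace ℝ (Fin d)) :
    gaussDensity d s x * Real.exp (‖x‖ ^ 2 / (4 * s)) =
      2 ^ ((d : ℝ) / 2) * gaussDensity d (2 * s) x := by
  have hprefactor : (2 * Real.pi * s) ^ (-(d : ℝ) / 2) =
      2 ^ ((d : ℝ) / 2) * (2 * Real.pi * (2 * s)) ^ (-(d : ℝ) / 2) := by
    rw [mul_left_comm (2 * Real.pi), Real.mul_rpow zero_le_two (by positivity), neg_div,
      Real.rpow_neg zero_le_two, mul_inv_cancel_left₀ (by positivity)]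
  rw [gaussDensity, gaussDensity, mul_assoc, ← Real.exp_add, hprefactor, mul_assoc]
  ring_nf

lemma gaussDensity_sub_le (hr : 0 < r) (hrT : r < T) (y z : EuclideanSpace ℝ (Fin d)) :
    gaussDensity d r (y - z) ≤
      (T / r) ^ ((d : ℝ) / 2) * gaussDensity d T y * Real.exp (‖z‖ ^ 2 / (2 * (T - r))) := by
  have hT : 0 < T := hr.trans hrT
  have hprefactor : (2 * Real.pi * r) ^ (-(d : ℝ) / 2) =
      (T / r) ^ ((d : ℝ) / 2) * (2 * Real.pi * T) ^ (-(d : ℝ) / 2) := by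
    rw [neg_div, Real.rpow_neg_eq_inv_rpow, Real.rpow_neg_eq_inv_rpow,
      ← Real.mul_rpow (by positivity) (by positivity)]
    congr 1
    field_simp
  have hexponent : -‖y - z‖ ^ 2 / (2 * r) ≤ -‖y‖ ^ 2 / (2 * T) + ‖z‖ ^ 2 / (2 * (T - r)) := by
    have h := norm_add_sq_div_add_le (y - z) z hr (sub_pos.2 hrT)
    rw [sub_add_cancel, add_sub_cancel] at h
    simp only [mul_comm (2 : ℝ), ← div_div, neg_div]
    linarith
  rw [gaussDensity, gaussDensity, hprefactor, mul_assoc (_ ^ _), mul_assoc (_ ^ _), mul_assoc,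
    mul_assoc (_ ^ _), ← Real.exp_add]
  gcongr

lemma gaussDensity_one_mul_gaussDensity_sub_sqrt_smul_le {r₀ : ℝ} (hr₀ : 0 < r₀) (hr : r₀ ≤ r)
    (hs : 0 ≤ s) (hrT : r < T) (hrs : r + 2 * s ≤ T) (y w : EuclideanSpace ℝ (Fin d)) :
    gaussDensity d 1 w * gaussDensity d r (y - √s • w) ≤
      (T / r₀) ^ ((d : ℝ) / 2) * 2 ^ ((d : ℝ) / 2) *
        (gaussDensity d T y * gaussDensity d 2 w) := by
  have hr_pos : 0 < r := hr₀.trans_le hr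
  have hT : 0 < T := hr_pos.trans hrT
  have hexponent : ‖√s • w‖ ^ 2 / (2 * (T - r)) ≤ ‖w‖ ^ 2 / (4 * 1) := by
    rw [norm_smul, mul_pow, Real.norm_eq_abs, sq_abs, Real.sq_sqrt hs,
      div_le_div_iff₀ (by linarith) (by norm_num)]
    nlinarith [mul_le_mul_of_nonneg_right hrs (sq_nonneg ‖w‖)]
  have hy := gaussDensity_nonneg hT.le y
  have hw := gaussDensity_nonneg zero_le_one w
  calc gaussDensity d 1 w * gaussDensity d r (y - √s • w)
      ≤ gaussDensity d 1 w * ((T / r) ^ ((d : ℝ) / 2) * gaussDensity d T y *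
          Real.exp (‖√s • w‖ ^ 2 / (2 * (T - r)))) := by
        gcongr
        exact gaussDensity_sub_le hr_pos hrT y _
    _ ≤ gaussDensity d 1 w * ((T / r₀) ^ ((d : ℝ) / 2) * gaussDensity d T y *
          Real.exp (‖w‖ ^ 2 / (4 * 1))) := by gcongr
    _ = (T / r₀) ^ ((d : ℝ) / 2) * gaussDensity d T y *
          (gaussDensity d 1 w * Real.exp (‖w‖ ^ 2 / (4 * 1))) := by ring
    _ = _ := by
        rw [gaussDensity_mul_exp_sq_div zero_le_one, mul_one]
        ring

lemma gaussDensity_one_mul_abs_gaussDensity_sub_le {r₀ : ℝ} (hr₀ : 0 < r₀) (hr : r₀ ≤ r)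
    (ht : r₀ ≤ t) (hs : 0 ≤ s) (hrT : r < T) (htT : t < T) (hrs : r + 2 * s ≤ T)
    (y w : EuclideanSpace ℝ (Fin d)) :
    gaussDensity d 1 w * |gaussDensity d r (y - √s • w) - gaussDensity d t y| ≤
      (T / r₀) ^ ((d : ℝ) / 2) * 2 ^ ((d : ℝ) / 2) *
        (gaussDensity d T y * gaussDensity d 2 w) := by
  have hw := gaussDensity_nonneg zero_le_one w
  nth_rw 1 [← abs_of_nonneg hw]
  rw [← abs_mul, mul_sub]
  refine abs_sub_le_of_nonneg_of_le (mul_nonneg hw (gaussDensity_nonneg (hr₀.le.trans hr) _))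
    (gaussDensity_one_mul_gaussDensity_sub_sqrt_smul_le hr₀ hr hs hrT hrs y w)
    (mul_nonneg hw (gaussDensity_nonneg (hr₀.le.trans ht) _)) ?_
  simpa using gaussDensity_one_mul_gaussDensity_sub_sqrt_smul_le hr₀ ht le_rfl htT (by linarith) y w

lemma lintegral_gaussDensity_mul (hs : 0 < s) (g : EuclideanSpace ℝ (Fin d) → ℝ) :
    ∫⁻ z, ENNReal.ofReal (gaussDensity d s z * g z) =
      ∫⁻ w, ENNReal.ofReal (gaussDensity d 1 w * g (√s • w)) := by
  have hc : 0 < √s := Real.sqrt_pos.2 hs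
  have hscale (w : EuclideanSpace ℝ (Fin d)) : gaussDensity d 1 w * g (√s • w) =
      √s ^ d * (gaussDensity d s (√s • w) * g (√s • w)) := by
    rw [← pow_mul_gaussDensity_sq_mul_smul hc zero_le_one w, Real.sq_sqrt hs.le, mul_one, mul_assoc]
  have hmap := lintegral_map_equiv (μ := volume)
    (fun z => ENNReal.ofReal (gaussDensity d s z * g z)) (MeasurableEquiv.smul₀ (√s) hc.ne')
  rw [MeasurableEquiv.coe_smul₀, Measure.map_addHaar_smul volume hc.ne', finrank_euclideanSpace_fin,
    lintegral_smul_measure, abs_of_pos (by positivity), smul_eq_mul] at hmap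
  simp_rw [hscale, ENNReal.ofReal_mul (by positivity : 0 ≤ √s ^ d)]
  rw [lintegral_const_mul' _ _ ENNReal.ofReal_ne_top, ← hmap, ← mul_assoc,
    ← ENNReal.ofReal_mul (by positivity), mul_inv_cancel₀ (by positivity), ENNReal.ofReal_one,
    one_mul]

lemma lintegral_lintegral_gaussDensity_mul_abs_sub (hs : 0 < s)
    (μ : Measure (EuclideanSpace ℝ (Fin d))) :
    ∫⁻ y, ∫⁻ z, ENNReal.ofReal (gaussDensity d s z *
        |gaussDensity d r (y - z) - gaussDensity d t y|) ∂volume ∂μ =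
      ∫⁻ p, ENNReal.ofReal (gaussDensity d 1 p.2 *
        |gaussDensity d r (p.1 - √s • p.2) - gaussDensity d t p.1|) ∂(μ.prod volume) := by
  rw [lintegral_prod _ (by fun_prop)]
  exact lintegral_congr fun y => lintegral_gaussDensity_mul hs fun z =>
    |gaussDensity d r (y - z) - gaussDensity d t y|

lemma lintegral_prod_gaussDensity_mul_ne_top {μ : Measure (EuclideanSpace ℝ (Fin d))}
    (hT : 0 ≤ T) (hμ : ∫⁻ u, ENNReal.ofReal (gaussDensity d T u) ∂μ < ∞) (hs : 0 < s) {C : ℝ}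
    (hC : 0 ≤ C) :
    ∫⁻ p, ENNReal.ofReal (C * (gaussDensity d T p.1 * gaussDensity d s p.2)) ∂(μ.prod volume)
      ≠ ∞ := by
  have hvol : ∫⁻ w, ENNReal.ofReal (gaussDensity d s w) ≠ ∞ :=
    (integrable_gaussDensity hs).lintegral_lt_top.ne
  simp_rw [ENNReal.ofReal_mul hC, ENNReal.ofReal_mul (gaussDensity_nonneg hT _)]
  rw [lintegral_const_mul' _ _ ENNReal.ofReal_ne_top,
    lintegral_prod_mul (f := fun y => ENNReal.ofReal (gaussDensity d T y))
      (g := fun w => ENNReal.ofReal (gaussDensity d s w)) (by fun_prop) (by fun_prop)]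
  exact ENNReal.mul_ne_top ENNReal.ofReal_ne_top (ENNReal.mul_ne_top hμ.ne hvol)

lemma tendsto_gaussDensity_one_mul_abs_gaussDensity_sub (ht : t ≠ 0)
    (y w : EuclideanSpace ℝ (Fin d)) :
    Tendsto (fun q : ℝ × ℝ =>
        gaussDensity d 1 w * |gaussDensity d q.1 (y - √q.2 • w) - gaussDensity d t y|)
      (𝓝 (t, 0)) (𝓝 0) := by
  have hpair : Tendsto (fun q : ℝ × ℝ => (q.1, y - √q.2 • w)) (𝓝 (t, 0)) (𝓝 (t, y)) := by
    have hcont : Continuous fun q : ℝ × ℝ => (q.1, y - √q.2 • w) := by fun_prop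
    simpa using hcont.tendsto (t, 0)
  have hdens := (continuousAt_gaussDensity_prod ht y).tendsto.comp hpair
  simpa [Function.comp_def] using
    ((hdens.sub_const (gaussDensity d t y)).abs.const_mul (gaussDensity d 1 w))

lemma tendsto_lintegral_gaussDensity_mul_abs_sub (ht : 0 < t) (hT : t < T)
    (μ : Measure (EuclideanSpace ℝ (Fin d)))
    (hμ : ∫⁻ u, ENNReal.ofReal (gaussDensity d T u) ∂μ < ∞) :
    Tendsto (fun q : ℝ × ℝ => ∫⁻ y, ∫⁻ z, ENNReal.ofReal (gaussDensity d q.2 z *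
        |gaussDensity d q.1 (y - z) - gaussDensity d t y|) ∂volume ∂μ)
      (𝓝 t ×ˢ 𝓝[>] 0) (𝓝 0) := by
  have hT_pos : 0 < T := ht.trans hT
  let F (q : ℝ × ℝ) (p : EuclideanSpace ℝ (Fin d) × EuclideanSpace ℝ (Fin d)) : ℝ≥0∞ :=
    ENNReal.ofReal (gaussDensity d 1 p.2 *
      |gaussDensity d q.1 (p.1 - √q.2 • p.2) - gaussDensity d t p.1|)
  have hF_meas (q : ℝ × ℝ) : Measurable (F q) := by fun_prop
  have hfilter : 𝓝 t ×ˢ 𝓝[>] (0 : ℝ) ≤ 𝓝 (t, 0) := by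
    rw [nhds_prod_eq]
    exact prod_mono_right _ nhdsWithin_le_nhds
  have hpos : ∀ᶠ q : ℝ × ℝ in 𝓝 t ×ˢ 𝓝[>] 0, 0 < q.2 :=
    tendsto_snd.eventually self_mem_nhdsWithin
  have hlower : ∀ᶠ q : ℝ × ℝ in 𝓝 t ×ˢ 𝓝[>] 0, t / 2 < q.1 :=
    tendsto_fst.eventually (lt_mem_nhds (half_lt_self ht))
  have hupper : ∀ᶠ q : ℝ × ℝ in 𝓝 t ×ˢ 𝓝[>] 0, q.1 + 2 * q.2 < T := by
    have hcont : Continuous fun q : ℝ × ℝ => q.1 + 2 * q.2 := by fun_prop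
    exact hfilter (hcont.continuousAt.eventually_lt_const (by simpa using hT))
  have hlim : Tendsto (fun q => ∫⁻ p, F q p ∂(μ.prod volume)) (𝓝 t ×ˢ 𝓝[>] 0) (𝓝 0) := by
    rw [← lintegral_zero (μ := μ.prod (volume : Measure (EuclideanSpace ℝ (Fin d))))]
    refine tendsto_lintegral_filter_of_dominated_convergence _ (.of_forall hF_meas) ?_
      (lintegral_prod_gaussDensity_mul_ne_top hT_pos.le hμ two_pos
        (C := (T / (t / 2)) ^ ((d : ℝ) / 2) * 2 ^ ((d : ℝ) / 2)) (by positivity))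
      (.of_forall fun p => ?_)
    · filter_upwards [hpos, hlower, hupper] with q hs hr hrs
      exact .of_forall fun p => ENNReal.ofReal_le_ofReal <|
        gaussDensity_one_mul_abs_gaussDensity_sub_le (half_pos ht) hr.le (half_le_self ht.le) hs.le
          (by linarith) hT hrs.le p.1 p.2
    · simpa using ENNReal.tendsto_ofReal
        ((tendsto_gaussDensity_one_mul_abs_gaussDensity_sub ht.ne' p.1 p.2).mono_left hfilter)
  refine hlim.congr' ?_
  filter_upwards [hpos] with q hs
  exact (lintegral_lintegral_gaussDensity_mul_abs_sub hs μ).symm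

end gaussDensity

theorem gauss_uniform_smoothing_general {d : ℕ} {t T c : ℝ} (ht : 0 < t) (hT : t < T) (hc : 0 < c)
    (μ : Measure (EuclideanSpace ℝ (Fin d)))
    (hμ : ∫⁻ u, ENNReal.ofReal (gaussDensity d T u) ∂μ < ∞) :
    Tendsto (fun h : ℝ => ⨆ h' ∈ Set.Icc h (c * h),
        ∫⁻ y, ∫⁻ z, ENNReal.ofReal (gaussDensity d h' z *
          |gaussDensity d (t - h) (y - z) - gaussDensity d t y|) ∂volume ∂μ)
      (𝓝[>] 0) (𝓝 0) := by
  have htime : Tendsto (fun h => t - h) (𝓝[>] 0) (𝓝 t) :=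
    ((continuous_sub_left t).tendsto' 0 t (sub_zero t)).mono_left nhdsWithin_le_nhds
  have hscale : Tendsto (fun h => c * h) (𝓝[>] 0) (𝓝[>] 0) := by
    refine tendsto_nhdsWithin_iff.2 ⟨?_, ?_⟩
    · exact ((continuous_const_mul c).tendsto' 0 0 (mul_zero c)).mono_left nhdsWithin_le_nhds
    · filter_upwards [self_mem_nhdsWithin] with h hh using mul_pos hc hh
  have hwindow : Tendsto (fun h => Set.Icc h (c * h)) (𝓝[>] 0) (𝓝[>] (0 : ℝ)).smallSets :=
    tendsto_id.Icc hscale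
  refine tendsto_biSup_zero_of_tendsto_smallSets ?_ hwindow
  exact (tendsto_lintegral_gaussDensity_mul_abs_sub ht hT μ hμ).comp (htime.prodMap tendsto_id)

/-- **Uniform smoothing estimate (from the proof of Theorem 8.1).** Let `d ≥ 1`, `t > 0`,
and let `μ` be σ-finite on `ℝ^d` with `μ p_{2t} < ∞`. Then
`sup_{h ≤ h' ≤ 2h} ∫ μ(dy) ∫ p_{h'}(z) |p_{t-h}(y - z) - p_t(y)| dz → 0`
as `h → 0⁺` (with `0 < h < t/2`). -/
theorem gauss_uniform_smoothing (d : ℕ) (hd : 1 ≤ d) (t : ℝ) (ht : 0 < t)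
    (μ : Measure (EuclideanSpace ℝ (Fin d))) [SigmaFinite μ]
    (hμ : ∫⁻ u, ENNReal.ofReal (gaussDensity d (2 * t) u) ∂μ < ⊤) :
    Tendsto (fun h : ℝ => ⨆ h' ∈ Set.Icc h (2 * h),
        ∫⁻ y, ∫⁻ z, ENNReal.ofReal (gaussDensity d h' z *
          |gaussDensity d (t - h) (y - z) - gaussDensity d t y|) ∂volume ∂μ)
      (nhdsWithin 0 (Set.Ioo 0 (t / 2))) (nhds 0) :=
  (gauss_uniform_smoothing_general ht (by linarith) two_pos μ hμ).mono_left
    (nhdsWithin_mono 0 Set.Ioo_subset_Ioi_self)
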